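/- arXiv:1703.10646 — 7 statements merged into one kernel-verified Lean document; each statement's English description precedes it below -/
import Mathlib

section
/- For each k ∈ {1,2,3,4} the intersection of the complex line V_k with the lattice Λ' equals the subgroup Λ_k; that is, V₁ ∩ Λ' = Λ₁, V₂ ∩ Λ' = Λ₂, V₃ ∩ Λ' = Λ₃ and V₄ ∩ Λ' = Λ₄ as subsets of ℂ². -/
noncomputable section

/-- ζ = (1 + √3·i)/2, a primitive sixth root of unity. -/
def ζ : ℂ := (1 + (Real.sqrt 3 : ℂ) * Complex.I) / 2

def e1 : ℂ × ℂ := (1, 0)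
def e2 : ℂ × ℂ := (0, 1)
def l1 : ℂ × ℂ := (ζ, 0)
def l2 : ℂ × ℂ := (0, ζ)

/-- The period lattice Λ' = ℤλ₁ ⊕ ℤλ₂ ⊕ ℤe₁ ⊕ ℤe₂ ⊂ ℂ². -/
def Λ' : Set (ℂ × ℂ) :=
  {v | ∃ a b c d : ℤ, v = (a : ℂ) • l1 + (b : ℂ) • l2 + (c : ℂ) • e1 + (d : ℂ) • e2}

/-- The complex line ℂ·w in ℂ². -/
def line (w : ℂ × ℂ) : Set (ℂ × ℂ) := {v | ∃ t : ℂ, v = t • w}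

/-- The rank-two subgroup ℤw₁ + ℤw₂ of ℂ². -/
def lat (w₁ w₂ : ℂ × ℂ) : Set (ℂ × ℂ) :=
  {v | ∃ a b : ℤ, v = (a : ℂ) • w₁ + (b : ℂ) • w₂}

/-
`Λ'` is `𝒪 × 𝒪` for the ring `𝒪 = ℤ[ζ]` of Eisenstein integers, and each `Λ_k` is `𝒪 w_k` for a
vector `w_k` spanning `V_k`: for `k = 4` this uses `ζ (e₁ + ζ e₂) = λ₁ + λ₂ - e₂`, that is,
`ζ² = ζ - 1`. Some `𝒪`-linear combination of the coordinates of `w_k` equals `1`. Applied to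
`t w_k ∈ 𝒪 × 𝒪` this combination gives `t`, so `t ∈ 𝒪`.
-/

open Submodule

theorem restrictScalars_span_singleton_inf_eq {S R M : Type*} [Semiring S] [Semiring R]
    [AddCommMonoid M] [Module S R] [Module R M] [Module S M] [IsScalarTower S R M]
    {N : Submodule S M} {w : M} (hw : w ∈ N)
    (φ : M →ₗ[R] R) (hφN : ∀ v ∈ N, φ v ∈ (1 : Submodule S R)) (hφw : φ w = 1) :
    (R ∙ w).restrictScalars S ⊓ N = S ∙ w := by
  apply le_antisymm
  · rintro _ ⟨hv, hvN⟩
    obtain ⟨t, rfl⟩ := mem_span_singleton.1 hv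
    have ht : t ∈ (1 : Submodule S R) := by simpa [hφw] using hφN _ hvN
    rw [one_eq_span] at ht
    obtain ⟨s, rfl⟩ := mem_span_singleton.1 ht
    exact mem_span_singleton.2 ⟨s, by rw [smul_assoc, one_smul]⟩
  · exact le_inf (span_le_restrictScalars S R {w}) ((span_singleton_le_iff_mem w N).2 hw)

theorem mem_adjoin_singleton_iff_of_mul_self_eq {R A : Type*} [CommSemiring R] [Semiring A]
    [Algebra R A] {z : A} {p q : R} (hz : z * z = p • z + q • 1) {x : A} :
    x ∈ Algebra.adjoin R {z} ↔ ∃ a b : R, x = a • z + b • 1 := by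
  constructor
  · intro hx
    induction hx using Algebra.adjoin_induction with
    | mem x hx => exact ⟨1, 0, by simpa using hx⟩
    | algebraMap r => exact ⟨0, r, by simp [Algebra.algebraMap_eq_smul_one]⟩
    | add x y _ _ hx hy =>
      obtain ⟨a, b, rfl⟩ := hx
      obtain ⟨c, d, rfl⟩ := hy
      exact ⟨a + c, b + d, by module⟩
    | mul x y _ _ hx hy =>
      obtain ⟨a, b, rfl⟩ := hx
      obtain ⟨c, d, rfl⟩ := hy
      refine ⟨a * c * p + a * d + b * c, a * c * q + b * d, ?_⟩
      calc (a • z + b • 1) * (c • z + d • 1)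
          = (a * c) • (z * z) + (a * d + b * c) • z + (b * d) • 1 := by
            simp only [add_mul, mul_add, smul_mul_assoc, mul_smul_comm, one_mul, mul_one]
            module
        _ = (a * c * p + a * d + b * c) • z + (a * c * q + b * d) • 1 := by
            rw [hz]
            module
  · rintro ⟨a, b, rfl⟩
    exact add_mem (Subalgebra.smul_mem _ (Algebra.self_mem_adjoin_singleton R z) a)
      (Subalgebra.smul_mem _ (one_mem _) b)

theorem mem_one_subalgebra_iff {R A : Type*} [CommSemiring R] [CommSemiring A] [Algebra R A]
    {T : Subalgebra R A} {x : A} : x ∈ (1 : Submodule T A) ↔ x ∈ T := by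
  rw [mem_one]
  exact ⟨fun ⟨y, hy⟩ ↦ hy ▸ y.2, fun hx ↦ ⟨⟨x, hx⟩, rfl⟩⟩

theorem ζ_mul_self : ζ * ζ = ζ - 1 := by
  have sqrt_three_mul_self : (√3 : ℂ) * (√3 : ℂ) = 3 := by
    rw [← Complex.ofReal_mul, Real.mul_self_sqrt (by norm_num), Complex.ofReal_ofNat]
  unfold ζ
  linear_combination
    (1 / 4 : ℂ) * (Complex.I * Complex.I) * sqrt_three_mul_self + (3 / 4 : ℂ) * Complex.I_mul_I

/-- The ring `ℤ[ζ]` of Eisenstein integers inside `ℂ`, over which `Λ'` is the standard free module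
of rank two. -/
abbrev EisensteinInt : Subalgebra ℤ ℂ := Algebra.adjoin ℤ {ζ}

theorem mem_eisensteinInt_iff {z : ℂ} : z ∈ EisensteinInt ↔ ∃ a b : ℤ, z = a * ζ + b := by
  have hζ : ζ * ζ = (1 : ℤ) • ζ + (-1 : ℤ) • (1 : ℂ) := by
    rw [ζ_mul_self, one_smul, neg_one_smul, sub_eq_add_neg]
  simpa only [zsmul_eq_mul, mul_one] using mem_adjoin_singleton_iff_of_mul_self_eq hζ

theorem Λ'_eq_prod :
    Λ' = ((1 : Submodule EisensteinInt ℂ).prod (1 : Submodule EisensteinInt ℂ) : Set (ℂ × ℂ)) := by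
  ext ⟨x, y⟩
  simp only [SetLike.mem_coe, mem_prod, mem_one_subalgebra_iff, mem_eisensteinInt_iff]
  simp only [Λ', l1, l2, e1, e2, Set.mem_ofPred_eq, Prod.smul_mk, Prod.mk_add_mk, Prod.mk.injEq,
    smul_eq_mul, mul_zero, mul_one, add_zero, zero_add]
  constructor
  · rintro ⟨a, b, c, d, hx, hy⟩
    exact ⟨⟨a, c, hx⟩, b, d, hy⟩
  · rintro ⟨⟨a, c, hx⟩, b, d, hy⟩
    exact ⟨a, b, c, d, hx, hy⟩

theorem line_eq_span_singleton (w : ℂ × ℂ) : line w = (ℂ ∙ w : Set (ℂ × ℂ)) := by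
  ext v
  simp only [line, Set.mem_ofPred_eq, SetLike.mem_coe, mem_span_singleton, eq_comm]

theorem lat_ζ_smul_eq_span_singleton (w : ℂ × ℂ) :
    lat (ζ • w) w = (EisensteinInt ∙ w : Set (ℂ × ℂ)) := by
  ext v
  simp only [SetLike.mem_coe, mem_span_singleton]
  constructor
  · rintro ⟨a, b, rfl⟩
    refine ⟨⟨a * ζ + b, mem_eisensteinInt_iff.2 ⟨a, b, rfl⟩⟩, ?_⟩
    rw [Subalgebra.smul_def, add_smul, mul_smul]
  · rintro ⟨⟨z, hz⟩, rfl⟩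
    obtain ⟨a, b, rfl⟩ := mem_eisensteinInt_iff.1 hz
    exact ⟨a, b, by rw [Subalgebra.smul_def, add_smul, mul_smul]⟩

theorem line_inter_Λ' {w : ℂ × ℂ} (hw : w ∈ Λ') (α β : EisensteinInt)
    (hαβ : α • w.1 + β • w.2 = 1) : line w ∩ Λ' = lat (ζ • w) w := by
  rw [Λ'_eq_prod] at hw ⊢
  rw [line_eq_span_singleton, lat_ζ_smul_eq_span_singleton]
  let φ : ℂ × ℂ →ₗ[ℂ] ℂ := α • .fst ℂ ℂ ℂ + β • .snd ℂ ℂ ℂ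
  exact congrArg SetLike.coe <| restrictScalars_span_singleton_inf_eq hw φ
    (fun _ hv ↦ add_mem (smul_mem _ α hv.1) (smul_mem _ β hv.2)) hαβ

/-- For each k the intersection of the line V_k with the lattice Λ' equals Λ_k. -/
theorem stmt0 :
    line e1 ∩ Λ' = lat l1 e1 ∧
    line e2 ∩ Λ' = lat l2 e2 ∧
    line (e1 + e2) ∩ Λ' = lat (l1 + l2) (e1 + e2) ∧
    line (e1 + ζ • e2) ∩ Λ' = lat (l1 + l2 - e2) (l2 + e1) := by
  have hl1 : l1 = ζ • e1 := by simp [l1, e1]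
  have hl2 : l2 = ζ • e2 := by simp [l2, e2]
  have hζ_smul_w₃ : l1 + l2 = ζ • (e1 + e2) := by rw [hl1, hl2, smul_add]
  have hζ_smul_w₄ : l1 + l2 - e2 = ζ • (e1 + ζ • e2) := by
    rw [smul_add, smul_smul, ζ_mul_self, sub_smul, one_smul, ← hl1, ← hl2, add_sub_assoc]
  have hw₄ : l2 + e1 = e1 + ζ • e2 := by rw [hl2, add_comm]
  rw [hζ_smul_w₄, hw₄, hζ_smul_w₃, hl1, hl2]
  refine ⟨line_inter_Λ' ⟨0, 0, 1, 0, by simp⟩ 1 0 ?_,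
    line_inter_Λ' ⟨0, 0, 0, 1, by simp⟩ 0 1 ?_,
    line_inter_Λ' ⟨0, 0, 1, 1, by simp⟩ 1 0 ?_,
    line_inter_Λ' ⟨0, 1, 1, 0, by simp [hl2, add_comm]⟩ 1 0 ?_⟩ <;> simp [e1, e2]
end
end

section
/- For all i ≠ j in {1,2,3,4}: (a) V_i ∩ V_j = {0} (so V_i + V_j = ℂ²), and (b) whenever v ∈ V_i, w ∈ V_j and v − w ∈ Λ', one has v ∈ Λ' (equivalently v ∈ Λ_i and w ∈ Λ_j). In other words, the four elliptic curves E'_k = V_k/Λ_k inside A' = ℂ²/Λ' intersect pairwise transversally at the origin and at no other point. -/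
noncomputable section

/-- The four complex lines V₁, V₂, V₃, V₄. -/
def Vline : Fin 4 → Set (ℂ × ℂ) :=
  ![line e1, line e2, line (e1 + e2), line (e1 + ζ • e2)]

/-- The four sublattices Λ₁, Λ₂, Λ₃, Λ₄. -/
def Lam : Fin 4 → Set (ℂ × ℂ) :=
  ![lat l1 e1, lat l2 e2, lat (l1 + l2) (e1 + e2), lat (l1 + l2 - e2) (l2 + e1)]

/-!
If `v = t • d` and `w = s • d'` lie on two of the lines and `v - w ∈ Λ' = ℤ[ζ]²`, then Cramer's rule
recovers `t` and `s` from the entries of `v - w`, `d` and `d'` at the cost of dividing by the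
determinant of `(d, d')`. For any two of the four directions this determinant is a sixth root of
unity, hence a unit of `ℤ[ζ]`, so `t` and `s` already lie in `ℤ[ζ]`.
-/

section Wedge

variable {R : Type*} [CommRing R]

/-- The determinant of the `2 × 2` matrix with rows `x` and `y`, for `x` and `y` given as pairs. It
measures the failure of `x` and `y` to form a basis of `R × R`. -/
def wedge (x y : R × R) : R := x.1 * y.2 - x.2 * y.1

theorem wedge_smul_sub_smul (t s : R) (x y : R × R) :
    wedge (t • x - s • y) y = t * wedge x y := by
  simp only [wedge, Prod.fst_sub, Prod.snd_sub, Prod.smul_fst, Prod.smul_snd, smul_eq_mul]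
  ring

theorem wedge_zero_left (y : R × R) : wedge 0 y = 0 := by
  simp [wedge]

theorem eq_zero_of_smul_eq_smul [NoZeroDivisors R] {x y : R × R} (hxy : wedge x y ≠ 0) {t s : R}
    (h : t • x = s • y) : t = 0 := by
  have key : t * wedge x y = 0 := by
    rw [← wedge_smul_sub_smul t s, sub_eq_zero.mpr h, wedge_zero_left]
  exact (mul_eq_zero.mp key).resolve_right hxy

theorem wedge_mem {S : Subring R} {x y : R × R} (hx : x ∈ S.prod S) (hy : y ∈ S.prod S) :
    wedge x y ∈ S :=
  sub_mem (mul_mem hx.1 hy.2) (mul_mem hx.2 hy.1)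

theorem mem_of_mul_mem_of_pow_eq_one {M σ : Type*} [Monoid M] [SetLike σ M] [SubmonoidClass σ M]
    {S : σ} {a u : M} {n : ℕ} (hn : n ≠ 0) (hu : u ∈ S) (hun : u ^ n = 1) (hau : a * u ∈ S) :
    a ∈ S := by
  have ha : a * u * u ^ (n - 1) = a := by rw [mul_assoc, mul_pow_sub_one hn, hun, mul_one]
  exact ha ▸ mul_mem hau (pow_mem hu (n - 1))

theorem mem_of_smul_sub_smul_mem {S : Subring R} {x y : R × R} (hx : x ∈ S.prod S)
    (hy : y ∈ S.prod S) {n : ℕ} (hn : n ≠ 0) (hxy : wedge x y ^ n = 1) {t s : R}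
    (h : t • x - s • y ∈ S.prod S) : t ∈ S :=
  mem_of_mul_mem_of_pow_eq_one hn (wedge_mem hx hy) hxy
    (wedge_smul_sub_smul t s x y ▸ wedge_mem h hy)

end Wedge

theorem line_inter_line_eq_singleton_zero {x y : ℂ × ℂ} (hxy : wedge x y ≠ 0) :
    line x ∩ line y = {0} := by
  refine Set.Subset.antisymm ?_ (Set.singleton_subset_iff.mpr ⟨⟨0, by simp⟩, ⟨0, by simp⟩⟩)
  rintro v ⟨⟨t, rfl⟩, s, hs⟩
  rw [Set.mem_singleton_iff, eq_zero_of_smul_eq_smul hxy hs, zero_smul]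

theorem ζ_sq : ζ ^ 2 = ζ - 1 := by
  have sqrt_three_sq : (Real.sqrt 3 : ℂ) ^ 2 = 3 := by
    exact_mod_cast Real.sq_sqrt (show (0 : ℝ) ≤ 3 by norm_num)
  unfold ζ
  linear_combination (1 / 4 : ℂ) * Complex.I ^ 2 * sqrt_three_sq + (3 / 4 : ℂ) * Complex.I_sq

theorem ζ_pow_six : ζ ^ 6 = 1 := by
  have ζ_cube : ζ ^ 3 = -1 := by linear_combination (ζ + 1) * ζ_sq
  rw [show 6 = 3 * 2 from rfl, pow_mul, ζ_cube, neg_one_sq]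

/-- The ring `ℤ[ζ]` of Eisenstein integers, as the image of `ℤ[X] / (X² - X + 1)` in `ℂ` under
`X ↦ ζ`; the period lattice is its square. -/
def eisensteinIntegers : Subring ℂ :=
  (QuadraticAlgebra.lift ⟨ζ, by rw [← sq, ζ_sq]; module⟩ :
    QuadraticAlgebra ℤ (-1) 1 →ₐ[ℤ] ℂ).toRingHom.range

theorem mem_eisensteinIntegers {z : ℂ} :
    z ∈ eisensteinIntegers ↔ ∃ a b : ℤ, z = a * ζ + b := by
  constructor
  · rintro ⟨w, rfl⟩
    exact ⟨w.im, w.re, by simp [QuadraticAlgebra.lift, add_comm]⟩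
  · rintro ⟨a, b, rfl⟩
    exact ⟨⟨b, a⟩, by simp [QuadraticAlgebra.lift, add_comm]⟩

theorem ζ_mem_eisensteinIntegers : ζ ∈ eisensteinIntegers :=
  mem_eisensteinIntegers.mpr ⟨1, 0, by simp⟩

theorem mem_Λ'_iff {v : ℂ × ℂ} : v ∈ Λ' ↔ v ∈ eisensteinIntegers.prod eisensteinIntegers := by
  simp only [Subring.mem_prod, mem_eisensteinIntegers]
  constructor
  · rintro ⟨a, b, c, d, rfl⟩
    exact ⟨⟨a, c, by simp [l1, l2, e1, e2]⟩, ⟨b, d, by simp [l1, l2, e1, e2]⟩⟩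
  · rintro ⟨⟨a, c, h₁⟩, ⟨b, d, h₂⟩⟩
    exact ⟨a, b, c, d, by ext1 <;> simp [l1, l2, e1, e2, h₁, h₂]⟩

theorem mem_lat_ζ_smul {v w : ℂ × ℂ} :
    v ∈ lat (ζ • w) w ↔ ∃ t ∈ eisensteinIntegers, v = t • w := by
  have combination (a b : ℤ) : (a : ℂ) • ζ • w + (b : ℂ) • w = (a * ζ + b : ℂ) • w := by module
  simp only [mem_eisensteinIntegers]
  constructor
  · rintro ⟨a, b, rfl⟩
    exact ⟨_, ⟨a, b, rfl⟩, combination a b⟩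
  · rintro ⟨_, ⟨a, b, rfl⟩, rfl⟩
    exact ⟨a, b, (combination a b).symm⟩

/-- Direction vectors of the four lines, scaled so that `Λ_i = ℤ[ζ] • direction i`. -/
def direction : Fin 4 → ℂ × ℂ := ![e1, e2, e1 + e2, e1 + ζ • e2]

theorem Vline_eq_line (i : Fin 4) : Vline i = line (direction i) := by
  fin_cases i <;> rfl

theorem Lam_eq_lat (i : Fin 4) : Lam i = lat (ζ • direction i) (direction i) := by
  have l1_eq : l1 = ζ • e1 := by simp [l1, e1]
  have l2_eq : l2 = ζ • e2 := by simp [l2, e2]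
  have diagonal : l1 + l2 = ζ • (e1 + e2) := by rw [l1_eq, l2_eq, smul_add]
  have twisted : l1 + l2 - e2 = ζ • (e1 + ζ • e2) := by
    rw [smul_add, smul_smul, ← sq, ζ_sq, l1_eq, l2_eq]
    module
  have twisted' : l2 + e1 = e1 + ζ • e2 := by rw [l2_eq, add_comm]
  fin_cases i
  · exact congrArg (lat · e1) l1_eq
  · exact congrArg (lat · e2) l2_eq
  · exact congrArg (lat · (e1 + e2)) diagonal
  · exact congrArg₂ lat twisted twisted'

theorem mem_Lam_iff {i : Fin 4} {v : ℂ × ℂ} :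
    v ∈ Lam i ↔ ∃ t ∈ eisensteinIntegers, v = t • direction i := by
  rw [Lam_eq_lat, mem_lat_ζ_smul]

theorem direction_mem (i : Fin 4) :
    direction i ∈ eisensteinIntegers.prod eisensteinIntegers := by
  rw [Subring.mem_prod]
  fin_cases i <;> simp [direction, e1, e2, ζ_mem_eisensteinIntegers, zero_mem, one_mem]

theorem Lam_subset_Λ' (i : Fin 4) : Lam i ⊆ Λ' := by
  intro v hv
  obtain ⟨t, ht, rfl⟩ := mem_Lam_iff.mp hv
  exact mem_Λ'_iff.mpr ⟨mul_mem ht (direction_mem i).1, mul_mem ht (direction_mem i).2⟩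

theorem wedge_direction_pow_six {i j : Fin 4} (hij : i ≠ j) :
    wedge (direction i) (direction j) ^ 6 = 1 := by
  have neg_pow_six (z : ℂ) : (-z) ^ 6 = z ^ 6 := Even.neg_pow (by decide) z
  have ζ_sub_one_pow_six : (ζ - 1) ^ 6 = 1 := by
    rw [← ζ_sq, pow_right_comm, ζ_pow_six, one_pow]
  have one_sub_ζ_pow_six : (1 - ζ) ^ 6 = 1 := by
    rw [← neg_sub, neg_pow_six, ζ_sub_one_pow_six]
  fin_cases i <;> fin_cases j <;>
    first
    | exact absurd rfl hij
    | simp [wedge, direction, e1, e2, neg_pow_six, ζ_pow_six, ζ_sub_one_pow_six, one_sub_ζ_pow_six]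

theorem mem_Lam_of_sub_mem_Λ' {i j : Fin 4} (hij : i ≠ j) {v w : ℂ × ℂ} (hv : v ∈ Vline i)
    (hw : w ∈ Vline j) (h : v - w ∈ Λ') : v ∈ Lam i := by
  rw [Vline_eq_line] at hv hw
  obtain ⟨t, rfl⟩ := hv
  obtain ⟨s, rfl⟩ := hw
  have ht : t ∈ eisensteinIntegers :=
    mem_of_smul_sub_smul_mem (direction_mem i) (direction_mem j) (by decide)
      (wedge_direction_pow_six hij) (mem_Λ'_iff.mp h)
  exact mem_Lam_iff.mpr ⟨t, ht, rfl⟩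

theorem sub_mem_Λ'_comm {v w : ℂ × ℂ} : v - w ∈ Λ' ↔ w - v ∈ Λ' := by
  rw [mem_Λ'_iff, mem_Λ'_iff, sub_mem_comm_iff]

/-- For i ≠ j: V_i ∩ V_j = {0}, and if v ∈ V_i, w ∈ V_j with v − w ∈ Λ' then v ∈ Λ'
(equivalently v ∈ Λ_i and w ∈ Λ_j): the elliptic curves E'_k intersect pairwise
transversally at the origin and nowhere else. -/
theorem stmt1 (i j : Fin 4) (hij : i ≠ j) :
    (Vline i ∩ Vline j = {0}) ∧
    (∀ v ∈ Vline i, ∀ w ∈ Vline j, v - w ∈ Λ' →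
      v ∈ Λ' ∧ v ∈ Lam i ∧ w ∈ Lam j) := by
  constructor
  · have hwedge : wedge (direction i) (direction j) ≠ 0 :=
      (IsUnit.of_pow_eq_one (wedge_direction_pow_six hij) (by decide)).ne_zero
    rw [Vline_eq_line, Vline_eq_line]
    exact line_inter_line_eq_singleton_zero hwedge
  · intro v hv w hw h
    have hvi : v ∈ Lam i := mem_Lam_of_sub_mem_Λ' hij hv hw h
    have hwj : w ∈ Lam j := mem_Lam_of_sub_mem_Λ' hij.symm hw hv (sub_mem_Λ'_comm.mp h)
    exact ⟨Lam_subset_Λ' i hvi, hvi, hwj⟩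
end
end

section
/- Let ε ∈ {±1}⁴ be different from (1,1,1,1) and let L_ε = {a ∈ ℤ⁴ : χ_ε(a) = 1} be the kernel of χ_ε. Then E(a,b) is even for all a, b ∈ L_ε if and only if ε is one of (−1,−1,1,−1), (1,−1,−1,1), (−1,1,−1,−1), i.e. if and only if χ_ε ∈ {χ₁, χ₂, χ₃}. -/
noncomputable section

/-- The character χ_ε : ℤ⁴ → {±1}, χ_ε(a) = ε₁^{a₁}ε₂^{a₂}ε₃^{a₃}ε₄^{a₄}. -/
def chiE (ε : Fin 4 → ℤˣ) (a : Fin 4 → ℤ) : ℤˣ := ∏ i, ε i ^ a i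

/-- The alternating ℤ-bilinear form E on ℤ⁴ (imaginary part of the hermitian form of
the branch divisor D_{A'} in the basis (λ₁,λ₂,e₁,e₂)). -/
def Eform (a b : Fin 4 → ℤ) : ℤ :=
  -(a 0 * b 1 - a 1 * b 0) + 3 * (a 0 * b 2 - a 2 * b 0) - 2 * (a 0 * b 3 - a 3 * b 0)
    - (a 1 * b 2 - a 2 * b 1) + 3 * (a 1 * b 3 - a 3 * b 1) - (a 2 * b 3 - a 3 * b 2)

/-!
Modulo `2` the form `E` has rank two: it is the wedge product `χ₁ ∧ χ₂` of the functionals on `𝔽₂⁴`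
given by `χ₁` and `χ₂`. Over any field, a product `f ∧ g` of independent functionals vanishes on the
hyperplane `ker l` iff `f` and `g` become dependent there, that is, iff some nonzero combination of
them is a multiple of `l`, iff `l ∈ ⟨f, g⟩`. Over `𝔽₂` the nonzero elements of `⟨χ₁, χ₂⟩` are `χ₁`,
`χ₂` and `χ₁ + χ₂ = χ₃`.
-/

open Module Submodule
open LinearMap (BilinForm)

section Wedge

variable {R M : Type*} [CommRing R] [AddCommGroup M] [Module R M]

/-- The wedge product `f ∧ g` of two linear functionals, as the alternating bilinear form
`(u, v) ↦ f u * g v - g u * f v`. -/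
def dualWedge (f g : Dual R M) : BilinForm R M :=
  BilinForm.linMulLin f g - BilinForm.linMulLin g f

lemma dualWedge_apply (f g : Dual R M) (u v : M) :
    dualWedge f g u v = f u * g v - g u * f v := rfl

lemma dualWedge_restrict (f g : Dual R M) (N : Submodule R M) :
    (dualWedge f g).restrict N = dualWedge (N.dualRestrict f) (N.dualRestrict g) := rfl

lemma linearIndependent_pair_of_dualWedge_ne_zero [NoZeroDivisors R] {f g : Dual R M}
    (hfg : dualWedge f g ≠ 0) : LinearIndependent R ![f, g] := by
  refine LinearIndependent.pair_iff.mpr fun c d hcd ↦ ?_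
  have relation (w : M) : c * f w + d * g w = 0 := LinearMap.congr_fun hcd w
  contrapose! hfg
  ext u v
  rw [dualWedge_apply, LinearMap.zero_apply, LinearMap.zero_apply]
  by_cases hc : c = 0
  · refine (mul_eq_zero.mp ?_).resolve_left (hfg hc)
    linear_combination f u * relation v - f v * relation u
  · refine (mul_eq_zero.mp ?_).resolve_left hc
    linear_combination g v * relation u - g u * relation v

lemma dualWedge_ne_zero_of_linearIndependent [Nontrivial R] {f g : Dual R M}
    (hind : LinearIndependent R ![f, g]) : dualWedge f g ≠ 0 := by
  intro hfg
  have relation (u : M) : -g u • f + f u • g = 0 := by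
    ext v
    simpa [dualWedge_apply, sub_eq_neg_add] using LinearMap.congr_fun₂ hfg u v
  have hf : f = 0 := by
    ext u
    exact (LinearIndependent.pair_iff.mp hind _ _ (relation u)).2
  exact hind.ne_zero 0 hf

theorem dualWedge_ne_zero_iff [IsDomain R] {f g : Dual R M} :
    dualWedge f g ≠ 0 ↔ LinearIndependent R ![f, g] :=
  ⟨linearIndependent_pair_of_dualWedge_ne_zero, dualWedge_ne_zero_of_linearIndependent⟩

end Wedge

section RestrictionToHyperplane

variable {K V : Type*} [Field K] [AddCommGroup V] [Module K V]

lemma dualAnnihilator_ker_eq_span_singleton (l : Dual K V) :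
    l.ker.dualAnnihilator = K ∙ l := by
  rw [← LinearMap.range_dualMap_eq_dualAnnihilator_ker,
    LinearMap.range_dualMap_dual_eq_span_singleton]

lemma linearIndependent_dualRestrict_ker_iff {ι : Type*} {v : ι → Dual K V}
    (hv : LinearIndependent K v) {l : Dual K V} (hl : l ≠ 0) :
    LinearIndependent K (l.ker.dualRestrict ∘ v) ↔ l ∉ span K (Set.range v) := by
  rw [← disjoint_span_singleton' hl, ← dualAnnihilator_ker_eq_span_singleton,
    ← dualRestrict_ker_eq_dualAnnihilator]
  exact ⟨range_ker_disjoint, fun h ↦ (LinearMap.linearIndependent_iff_of_disjoint _ h).mpr hv⟩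

theorem dualWedge_restrict_ker_eq_zero_iff {f g l : Dual K V}
    (hfg : LinearIndependent K ![f, g]) (hl : l ≠ 0) :
    (dualWedge f g).restrict l.ker = 0 ↔ l ∈ span K {f, g} := by
  have hcomp : ![l.ker.dualRestrict f, l.ker.dualRestrict g] = l.ker.dualRestrict ∘ ![f, g] :=
    funext (Fin.forall_fin_two.mpr ⟨rfl, rfl⟩)
  rw [← not_iff_not, ← ne_eq, dualWedge_restrict, dualWedge_ne_zero_iff, hcomp,
    linearIndependent_dualRestrict_ker_iff hfg hl, Matrix.range_cons_cons_empty]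

end RestrictionToHyperplane

lemma mem_span_pair_zmod_two_iff {M : Type*} [AddCommMonoid M] [Module (ZMod 2) M] {x y z : M} :
    z ∈ span (ZMod 2) {x, y} ↔ z = 0 ∨ z = x ∨ z = y ∨ z = x + y := by
  have exists_zmod_two (p : ZMod 2 → Prop) : (∃ c, p c) ↔ p 0 ∨ p 1 := Fin.exists_fin_two
  simp only [mem_span_pair, exists_zmod_two, zero_smul, one_smul, zero_add, add_zero]
  grind

/-- The vector of signs `(-1) ^ s i` with exponents modulo `2`. It identifies `𝔽₂ⁿ` with `{±1}ⁿ`,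
turning the characters `ℤⁿ → {±1}` into the linear functionals on `𝔽₂ⁿ`. -/
def signVector {ι : Type*} (s : ι → ZMod 2) (i : ι) : ℤˣ := (-1) ^ s i

lemma neg_one_uzpow_bijective : Function.Bijective fun x : ZMod 2 ↦ (-1 : ℤˣ) ^ x := by
  decide

lemma signVector_bijective {ι : Type*} :
    Function.Bijective (signVector : (ι → ZMod 2) → ι → ℤˣ) :=
  neg_one_uzpow_bijective.comp_left

lemma chiE_signVector (s : Fin 4 → ZMod 2) (a : Fin 4 → ℤ) :
    chiE (signVector s) a = (-1) ^ (s ⬝ᵥ (Int.cast ∘ a)) := by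
  simp only [chiE, signVector, ← uzpow_intCast (R := ZMod 2), ← uzpow_mul, ← uzpow_add,
    Fin.prod_univ_four, dotProduct, Fin.sum_univ_four, Function.comp_apply]

lemma chiE_signVector_eq_one_iff (s : Fin 4 → ZMod 2) (a : Fin 4 → ℤ) :
    chiE (signVector s) a = 1 ↔ dotProductEquiv _ _ s (Int.cast ∘ a) = 0 := by
  rw [chiE_signVector]
  exact neg_one_uzpow_bijective.injective.eq_iff' (uzpow_zero _)

/-- The exponents modulo `2` of `χ₁ = χ_(-1, -1, 1, -1)`. -/
def chi₁Exponent : Fin 4 → ZMod 2 := ![1, 1, 0, 1]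

/-- The exponents modulo `2` of `χ₂ = χ_(1, -1, -1, 1)`. -/
def chi₂Exponent : Fin 4 → ZMod 2 := ![0, 1, 1, 0]

lemma signVector_zero : signVector (0 : Fin 4 → ZMod 2) = ![1, 1, 1, 1] := by
  decide

lemma signVector_chi₁Exponent : signVector chi₁Exponent = ![-1, -1, 1, -1] := by
  decide

lemma signVector_chi₂Exponent : signVector chi₂Exponent = ![1, -1, -1, 1] := by
  decide

lemma signVector_chi₁Exponent_add_chi₂Exponent :
    signVector (chi₁Exponent + chi₂Exponent) = ![-1, 1, -1, -1] := by
  decide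

lemma chi₁Exponent_dotProduct (u : Fin 4 → ZMod 2) : chi₁Exponent ⬝ᵥ u = u 0 + u 1 + u 3 := by
  simp [chi₁Exponent, dotProduct, Fin.sum_univ_four]

lemma chi₂Exponent_dotProduct (u : Fin 4 → ZMod 2) : chi₂Exponent ⬝ᵥ u = u 1 + u 2 := by
  simp [chi₂Exponent, dotProduct, Fin.sum_univ_four]

/-- The reduction of `E` modulo `2`, presented as the wedge product of the functionals that
correspond to `χ₁` and `χ₂`; see `intCast_Eform`. -/
def EformModTwo : BilinForm (ZMod 2) (Fin 4 → ZMod 2) :=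
  dualWedge (dotProductEquiv _ _ chi₁Exponent) (dotProductEquiv _ _ chi₂Exponent)

lemma intCast_Eform (a b : Fin 4 → ℤ) :
    (Eform a b : ZMod 2) = EformModTwo (Int.cast ∘ a) (Int.cast ∘ b) := by
  simp only [Eform, EformModTwo, dualWedge_apply, dotProductEquiv_apply_apply,
    chi₁Exponent_dotProduct, chi₂Exponent_dotProduct, Function.comp_apply]
  push_cast
  ring_nf
  reduce_mod_char

lemma linearIndependent_chi₁Exponent_chi₂Exponent :
    LinearIndependent (ZMod 2)
      ![dotProductEquiv _ _ chi₁Exponent, dotProductEquiv _ _ chi₂Exponent] := by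
  rw [LinearIndependent.pair_iff]
  simp only [← map_smul, ← map_add, EmbeddingLike.map_eq_zero_iff]
  decide

lemma forall_even_Eform_iff_restrict_eq_zero (s : Fin 4 → ZMod 2) :
    (∀ a, chiE (signVector s) a = 1 → ∀ b, chiE (signVector s) b = 1 → Even (Eform a b)) ↔
      EformModTwo.restrict (dotProductEquiv _ _ s).ker = 0 := by
  have reduction_surjective : Function.Surjective fun a : Fin 4 → ℤ ↦ (Int.cast ∘ a : _ → ZMod 2) :=
    ZMod.intCast_surjective.comp_left
  simp only [chiE_signVector_eq_one_iff, ← ZMod.intCast_eq_zero_iff_even, intCast_Eform,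
    LinearMap.ext_iff, Subtype.forall, reduction_surjective.forall]
  rfl

/-- For non-trivial ε, E is even on ker χ_ε × ker χ_ε iff
ε ∈ {(−1,−1,1,−1), (1,−1,−1,1), (−1,1,−1,−1)}, i.e. χ_ε ∈ {χ₁, χ₂, χ₃}. -/
theorem stmt5 (ε : Fin 4 → ℤˣ) (hε : ε ≠ ![1, 1, 1, 1]) :
    (∀ a ∈ {a : Fin 4 → ℤ | chiE ε a = 1}, ∀ b ∈ {b : Fin 4 → ℤ | chiE ε b = 1},
      Even (Eform a b)) ↔
    (ε = ![-1, -1, 1, -1] ∨ ε = ![1, -1, -1, 1] ∨ ε = ![-1, 1, -1, -1]) := by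
  obtain ⟨s, rfl⟩ := signVector_bijective.surjective ε
  rw [← signVector_zero, signVector_bijective.injective.ne_iff] at hε
  have hs : dotProductEquiv _ _ s ≠ 0 := by simpa using hε
  simp only [Set.mem_ofPred_eq]
  rw [forall_even_Eform_iff_restrict_eq_zero, EformModTwo,
    dualWedge_restrict_ker_eq_zero_iff linearIndependent_chi₁Exponent_chi₂Exponent hs,
    mem_span_pair_zmod_two_iff, or_iff_right hs, ← map_add]
  simp only [(dotProductEquiv _ _).injective.eq_iff, ← signVector_chi₁Exponent,
    ← signVector_chi₂Exponent, ← signVector_chi₁Exponent_add_chi₂Exponent,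
    signVector_bijective.injective.eq_iff]
end
end

section
/- The matrix M = [[−ζ, 1], [0, 1]] ∈ GL(2,ℂ) satisfies M³ = I, maps the lattice Λ' bijectively onto itself (explicitly M(λ₁) = e₁ − λ₁, M(λ₂) = λ₁ + λ₂, M(e₁) = −λ₁, M(e₂) = e₁ + e₂), and its induced pullback action on characters of Λ' cyclically permutes χ₁, χ₂, χ₃: namely χ₁ ∘ M = χ₃, χ₃ ∘ M = χ₂, χ₂ ∘ M = χ₁. -/
noncomputable section

/-- The lattice element a₁λ₁ + a₂λ₂ + a₃e₁ + a₄e₂ with integer coefficients a. -/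
def toV (a : Fin 4 → ℤ) : ℂ × ℂ :=
  (a 0 : ℂ) • l1 + (a 1 : ℂ) • l2 + (a 2 : ℂ) • e1 + (a 3 : ℂ) • e2

/-- The linear map of ℂ² given by the matrix M = [[−ζ, 1], [0, 1]]. -/
def Mmap (v : ℂ × ℂ) : ℂ × ℂ := (-ζ * v.1 + v.2, v.2)

/-- The rational representation of M on the coordinates w.r.t. (λ₁,λ₂,e₁,e₂). -/
def MΛ (a : Fin 4 → ℤ) : Fin 4 → ℤ := ![-a 0 + a 1 - a 2, a 1, a 0 + a 3, a 3]

/-!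
Since `ζ² = ζ - 1`, the map `M` sends each of the generators `λ₁, λ₂, e₁, e₂` to an integral
combination of them, so by linearity it preserves `Λ'`; as `M³ = I`, its square preserves `Λ'` too
and is its inverse there. The pullback of a character along an integral matrix is the character
whose sign on each generator is the value of the original one on the image of that generator.
-/

theorem bijOn_of_isPeriodicPt {α : Type*} {f : α → α} {s : Set α} {n : ℕ} (hn : 0 < n)
    (hmaps : Set.MapsTo f s s) (hper : ∀ x ∈ s, Function.IsPeriodicPt f n x) :
    Set.BijOn f s s := by
  obtain ⟨k, rfl⟩ := Nat.exists_eq_succ_of_ne_zero hn.ne'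
  have inv : Set.InvOn f^[k] f s s :=
    ⟨hper, fun x hx => (Function.iterate_succ_apply' f k x).symm.trans (hper x hx)⟩
  exact inv.bijOn hmaps (hmaps.iterate k)

theorem prod_zpow_mulVec {ι κ G : Type*} [Fintype ι] [Fintype κ] [CommGroup G]
    (g : ι → G) (A : Matrix ι κ ℤ) (a : κ → ℤ) :
    ∏ i, g i ^ A.mulVec a i = ∏ j, (∏ i, g i ^ A i j) ^ a j := by
  have zpow_sum (x : G) (b : κ → ℤ) : x ^ ∑ j, b j = ∏ j, x ^ b j :=
    map_sum (zpowersHom G x).toAdditive b Finset.univ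
  calc ∏ i, g i ^ A.mulVec a i
      = ∏ i, ∏ j, g i ^ (A i j * a j) :=
        Finset.prod_congr rfl fun i _ => zpow_sum (g i) fun j => A i j * a j
    _ = ∏ j, ∏ i, g i ^ (A i j * a j) := Finset.prod_comm
    _ = ∏ j, (∏ i, g i ^ A i j) ^ a j := by simp only [zpow_mul, Finset.prod_zpow]

theorem isLinearMap_Mmap : IsLinearMap ℂ Mmap where
  map_add v w := by
    ext
    · simp only [Mmap, Prod.fst_add, Prod.snd_add]
      ring
    · rfl
  map_smul c v := by
    ext
    · simp only [Mmap, Prod.smul_fst, Prod.smul_snd, smul_eq_mul]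
      ring
    · rfl

theorem isPeriodicPt_three_Mmap (v : ℂ × ℂ) : Function.IsPeriodicPt Mmap 3 v := by
  change Mmap (Mmap (Mmap v)) = v
  ext
  · simp only [Mmap]
    linear_combination (-(ζ + 1) * v.1 + v.2) * ζ_sq
  · rfl

theorem Mmap_l1 : Mmap l1 = e1 - l1 := by
  ext
  · simp only [Mmap, l1, e1, Prod.fst_sub]
    linear_combination -ζ_sq
  · simp [Mmap, l1, e1]

theorem Mmap_l2 : Mmap l2 = l1 + l2 := by
  ext <;> simp [Mmap, l1, l2]

theorem Mmap_e1 : Mmap e1 = -l1 := by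
  ext <;> simp [Mmap, e1, l1]

theorem Mmap_e2 : Mmap e2 = e1 + e2 := by
  ext <;> simp [Mmap, e1, e2]

theorem Mmap_toV (a : Fin 4 → ℤ) : Mmap (toV a) = toV (MΛ a) := by
  calc Mmap (toV a)
      = (a 0 : ℂ) • (e1 - l1) + (a 1 : ℂ) • (l1 + l2) + (a 2 : ℂ) • -l1
          + (a 3 : ℂ) • (e1 + e2) := by
        simp only [toV, isLinearMap_Mmap.map_add, isLinearMap_Mmap.map_smul,
          Mmap_l1, Mmap_l2, Mmap_e1, Mmap_e2]
    _ = toV (MΛ a) := by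
        simp only [toV, MΛ, Matrix.cons_val]
        push_cast
        module

theorem Λ'_eq_range_toV : Λ' = Set.range toV := by
  ext v
  constructor
  · rintro ⟨a, b, c, d, rfl⟩
    exact ⟨![a, b, c, d], rfl⟩
  · rintro ⟨a, rfl⟩
    exact ⟨a 0, a 1, a 2, a 3, rfl⟩

theorem mapsTo_Mmap_Λ' : Set.MapsTo Mmap Λ' Λ' := by
  rw [Λ'_eq_range_toV]
  rintro _ ⟨a, rfl⟩
  exact ⟨MΛ a, (Mmap_toV a).symm⟩

theorem MΛ_eq_mulVec (a : Fin 4 → ℤ) :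
    MΛ a = !![-1, 1, -1, 0; 0, 1, 0, 0; 1, 0, 0, 1; 0, 0, 0, 1].mulVec a := by
  ext i
  fin_cases i <;> simp [MΛ, Matrix.mulVec, dotProduct, Fin.sum_univ_four, sub_eq_add_neg]

theorem chiE_mulVec (ε : Fin 4 → ℤˣ) (A : Matrix (Fin 4) (Fin 4) ℤ) (a : Fin 4 → ℤ) :
    chiE ε (A.mulVec a) = chiE (fun j => chiE ε (A.col j)) a :=
  prod_zpow_mulVec ε A a

theorem chiE_MΛ (ε : Fin 4 → ℤˣ) (a : Fin 4 → ℤ) :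
    chiE ε (MΛ a) = chiE ![ε 0 * ε 2, ε 0 * ε 1, ε 0, ε 2 * ε 3] a := by
  rw [MΛ_eq_mulVec, chiE_mulVec]
  congr 1
  ext j : 1
  fin_cases j <;> simp [chiE, Fin.prod_univ_four, Int.units_inv_eq_self]

/-- M³ = I, M maps Λ' bijectively onto itself (with the explicit images of the
generators as stated), its rational representation is MΛ, and the pullback action
of M cyclically permutes the characters: χ₁∘M = χ₃, χ₃∘M = χ₂, χ₂∘M = χ₁. -/
theorem stmt9 :
    (∀ v : ℂ × ℂ, Mmap (Mmap (Mmap v)) = v) ∧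
    Set.BijOn Mmap Λ' Λ' ∧
    (Mmap l1 = e1 - l1 ∧ Mmap l2 = l1 + l2 ∧ Mmap e1 = -l1 ∧ Mmap e2 = e1 + e2) ∧
    (∀ a : Fin 4 → ℤ, Mmap (toV a) = toV (MΛ a)) ∧
    (∀ a : Fin 4 → ℤ,
      chiE ![-1, -1, 1, -1] (MΛ a) = chiE ![-1, 1, -1, -1] a ∧
      chiE ![-1, 1, -1, -1] (MΛ a) = chiE ![1, -1, -1, 1] a ∧
      chiE ![1, -1, -1, 1] (MΛ a) = chiE ![-1, -1, 1, -1] a) := by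
  exact ⟨isPeriodicPt_three_Mmap,
    bijOn_of_isPeriodicPt three_pos mapsTo_Mmap_Λ' fun v _ => isPeriodicPt_three_Mmap v,
    ⟨Mmap_l1, Mmap_l2, Mmap_e1, Mmap_e2⟩,
    Mmap_toV,
    fun a => ⟨chiE_MΛ ![-1, -1, 1, -1] a, chiE_MΛ ![-1, 1, -1, -1] a, chiE_MΛ ![1, -1, -1, 1] a⟩⟩
end
end

section
/- In the group of permutations of {1,…,16}, the subgroup generated by p₂ and p₃ is isomorphic to SL(2, ℤ/3ℤ). -/
/-- The permutation p₂ = (1 13 7 12)(2 9 14 16)(3 5 15 6)(4 11 8 10) of {1,…,16},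
written 0-indexed on `Fin 16`. -/
def p2 : Equiv.Perm (Fin 16) :=
  ⟨![12, 8, 4, 10, 14, 2, 11, 9, 13, 3, 7, 0, 6, 15, 5, 1],
   ![11, 15, 5, 9, 2, 14, 12, 10, 1, 7, 3, 6, 0, 8, 4, 13],
   by decide, by decide⟩

/-- The permutation p₃ = (1 13 5 7 12 6)(2 4 11 14 8 10)(3 15)(9 16) of {1,…,16},
written 0-indexed on `Fin 16`. -/
def p3 : Equiv.Perm (Fin 16) :=
  ⟨![12, 3, 14, 10, 6, 0, 11, 9, 15, 1, 13, 5, 4, 7, 2, 8],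
   ![5, 9, 14, 1, 12, 11, 4, 13, 15, 7, 3, 6, 0, 10, 2, 8],
   by decide, by decide⟩

/-!
The sixteen points split into two orbits of eight, and each orbit can be labelled by the nonzero
vectors of the plane over `ZMod 3` so that `p2` acts as the matrix `S` and `p3` as `S * T`, where
`S` and `T` are the standard generators of `SL(2, ℤ)`. This action of `SL(2, ZMod 3)` is faithful.
Since transvections lift to `ℤ`, reduction `SL(2, ℤ) → SL(2, ZMod 3)` is surjective, so `S` and
`S * T` generate `SL(2, ZMod 3)`, and the subgroup generated by `p2` and `p3` is its image.
-/

open Matrix MatrixGroups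

section Generation

open Matrix.SpecialLinearGroup ModularGroup

lemma closure_pair_mul_right {G : Type*} [Group G] (a b : G) :
    Subgroup.closure {a, a * b} = Subgroup.closure {a, b} := by
  apply le_antisymm <;> rw [Subgroup.closure_le, Set.pair_subset_iff]
  · have ha : a ∈ Subgroup.closure {a, b} := Subgroup.mem_closure_of_mem (by simp)
    have hb : b ∈ Subgroup.closure {a, b} := Subgroup.mem_closure_of_mem (by simp)
    exact ⟨ha, mul_mem ha hb⟩
  · have ha : a ∈ Subgroup.closure {a, a * b} := Subgroup.mem_closure_of_mem (by simp)
    have hab : a * b ∈ Subgroup.closure {a, a * b} := Subgroup.mem_closure_of_mem (by simp)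
    exact ⟨ha, (Subgroup.mul_mem_cancel_left _ ha).1 hab⟩

/-- An injective homomorphism identifies its domain with the subgroup generated by the images of
a generating set. -/
noncomputable def mulEquivClosureImage {G H : Type*} [Group G] [Group H] {f : G →* H}
    (hf : Function.Injective f) {s : Set G} (hs : Subgroup.closure s = ⊤) :
    G ≃* Subgroup.closure (f '' s) :=
  (MonoidHom.ofInjective hf).trans <| MulEquiv.subgroupCongr <| by
    rw [← MonoidHom.map_closure, hs, MonoidHom.range_eq_map]

lemma map_transvection {ι R R' : Type*} [Fintype ι] [DecidableEq ι] [CommRing R] [CommRing R']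
    (f : R →+* R') {i j : ι} (hij : i ≠ j) (r : R) :
    map f (transvection hij r) = transvection hij (f r) := by
  ext k l
  simp [transvection_coe, Matrix.single_apply, Matrix.one_apply, apply_ite f]

lemma SL2_map_surjective {R F : Type*} [CommRing R] [Field F] {f : R →+* F}
    (hf : Function.Surjective f) :
    Function.Surjective (map f : SL(2, R) →* SL(2, F)) := by
  intro A
  induction A using SL2.transvection_induction with
  | htransvec i j hij c =>
    obtain ⟨r, rfl⟩ := hf c
    exact ⟨transvection hij r, map_transvection f hij r⟩
  | hmul A B hA hB =>
    obtain ⟨A, rfl⟩ := hA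
    obtain ⟨B, rfl⟩ := hB
    exact ⟨A * B, map_mul _ A B⟩

lemma closure_S_S_mul_T_eq_top (p : ℕ) [Fact p.Prime] :
    Subgroup.closure {(S : SL(2, ZMod p)), ((S * T : SL(2, ℤ)) : SL(2, ZMod p))} = ⊤ := by
  rw [← Set.image_pair, ← MonoidHom.map_closure, closure_pair_mul_right,
    SpecialLinearGroup.SL2Z_generators]
  exact Subgroup.map_top_of_surjective _ (SL2_map_surjective (ZMod.ringHom_surjective _))

end Generation

section Action

/-- The set of nonzero elements of `M`, stable under any group of additive automorphisms. -/
def nonzeroSubMulAction (G M : Type*) [Group G] [AddMonoid M] [DistribMulAction G M] :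
    SubMulAction G M where
  carrier := {x | x ≠ 0}
  smul_mem' g _ hx := (smul_ne_zero_iff_ne g).2 hx

instance (G M : Type*) [Group G] [AddMonoid M] [DistribMulAction G M] [FaithfulSMul G M] :
    FaithfulSMul G (nonzeroSubMulAction G M) where
  eq_of_smul_eq_smul {g h} hgh := by
    refine eq_of_smul_eq_smul (α := M) fun x => ?_
    obtain rfl | hx := eq_or_ne x 0
    · rw [smul_zero, smul_zero]
    · exact congrArg Subtype.val (hgh ⟨x, hx⟩)

instance {ι R : Type*} [Fintype ι] [DecidableEq ι] [CommRing R] :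
    FaithfulSMul (SpecialLinearGroup ι R) (ι → R) where
  eq_of_smul_eq_smul h := SpecialLinearGroup.toLin'_injective (LinearEquiv.ext h)

variable {G X Y : Type*} [Group G] [MulAction G X]

variable (G) in
/-- The permutation representation of `G` on `Y` obtained from its action on `X` when the points
of `Y` are labelled by those of `X`. -/
def labelledPermHom (e : Y ≃ X) : G →* Equiv.Perm Y :=
  e.symm.permCongrHom.toMonoidHom.comp (MulAction.toPermHom G X)

lemma labelledPermHom_injective [FaithfulSMul G X] (e : Y ≃ X) :
    Function.Injective (labelledPermHom G e) :=
  e.symm.permCongrHom.injective.comp MulAction.toPerm_injective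

lemma labelledPermHom_eq_of_forall {e : Y ≃ X} {g : G} {σ : Equiv.Perm Y}
    (h : ∀ y, e (σ y) = g • e y) : labelledPermHom G e g = σ :=
  Equiv.ext fun y => e.symm_apply_eq.2 (h y).symm

end Action

section SixteenPoints

open ModularGroup

/-- The nonzero vectors of the plane over `ZMod 3`, with the action of `SL(2, ZMod 3)`. -/
abbrev NonzeroVector := nonzeroSubMulAction SL(2, ZMod 3) (Fin 2 → ZMod 3)

instance : FaithfulSMul SL(2, ZMod 3) (Σ _ : Fin 2, NonzeroVector) :=
  Sigma.FaithfulSMul' 0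

/-- Which of the two orbits of the subgroup generated by `p2` and `p3` a point lies in. -/
def pointOrbit : Fin 16 → Fin 2 := ![0, 1, 0, 1, 0, 0, 0, 1, 1, 1, 1, 0, 0, 1, 0, 1]

/-- The vector labelling a point within its orbit. The points `0` and `3`, one in each orbit, are
fixed by `p2⁻¹ * p3` and get the vector `![1, 0]` fixed by `T`; letting `p2` act as `S` and `p3` as
`S * T` then forces all the other entries. -/
def pointVector : Fin 16 → Fin 2 → ZMod 3 :=
  ![![1, 0], ![1, 2], ![1, 1], ![1, 0], ![2, 1], ![1, 2], ![2, 0], ![2, 0],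
    ![1, 1], ![0, 2], ![0, 1], ![0, 2], ![0, 1], ![2, 1], ![2, 2], ![2, 2]]

lemma pointVector_ne_zero : ∀ k, pointVector k ≠ 0 := by decide

/-- The labelling of the sixteen points by two copies of the nonzero vectors. -/
def pointLabel (k : Fin 16) : Σ _ : Fin 2, NonzeroVector :=
  ⟨pointOrbit k, pointVector k, pointVector_ne_zero k⟩

lemma exists_pointOrbit_eq_and_pointVector_eq :
    ∀ (i : Fin 2) (v : Fin 2 → ZMod 3), v ≠ 0 → ∃ k, pointOrbit k = i ∧ pointVector k = v := by
  decide

lemma pointLabel_bijective : Function.Bijective pointLabel := by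
  refine ⟨by decide, ?_⟩
  rintro ⟨i, v, hv⟩
  obtain ⟨k, rfl, rfl⟩ := exists_pointOrbit_eq_and_pointVector_eq i v hv
  exact ⟨k, rfl⟩

/-- The action of `SL(2, ZMod 3)` on the sixteen points by way of their labels. -/
noncomputable def pointPermHom : SL(2, ZMod 3) →* Equiv.Perm (Fin 16) :=
  labelledPermHom _ (Equiv.ofBijective pointLabel pointLabel_bijective)

lemma pointPermHom_injective : Function.Injective pointPermHom :=
  labelledPermHom_injective _

lemma pointPermHom_eq_of_forall {g : SL(2, ZMod 3)} {σ : Equiv.Perm (Fin 16)}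
    (horbit : ∀ k, pointOrbit (σ k) = pointOrbit k)
    (hvector : ∀ k, pointVector (σ k) = g.1 *ᵥ pointVector k) : pointPermHom g = σ :=
  labelledPermHom_eq_of_forall fun k =>
    Sigma.ext (horbit k) (heq_of_eq (Subtype.ext (hvector k)))

lemma pointPermHom_S : pointPermHom S = p2 := by
  have hS : (S : SL(2, ZMod 3)).1 = !![0, -1; 1, 0] := by
    ext i j
    fin_cases i <;> fin_cases j <;> simp
  refine pointPermHom_eq_of_forall (by decide) ?_
  rw [hS]
  decide

lemma pointPermHom_S_mul_T : pointPermHom (S * T : SL(2, ℤ)) = p3 := by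
  have hST : ((S * T : SL(2, ℤ)) : SL(2, ZMod 3)).1 = !![0, -1; 1, 1] := by
    ext i j
    fin_cases i <;> fin_cases j <;> simp [Matrix.mul_apply]
  refine pointPermHom_eq_of_forall (by decide) ?_
  rw [hST]
  decide

end SixteenPoints

/-- The subgroup generated by p₂ and p₃ is isomorphic to SL(2, ℤ/3ℤ). -/
theorem stmt13 :
    Nonempty ((Subgroup.closure {p2, p3}) ≃*
      Matrix.SpecialLinearGroup (Fin 2) (ZMod 3)) := by
  rw [← pointPermHom_S, ← pointPermHom_S_mul_T, ← Set.image_pair]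
  exact ⟨(mulEquivClosureImage pointPermHom_injective (closure_S_S_mul_T_eq_top 3)).symm⟩
end

section
/- The natural action on {1,…,16} of the subgroup generated by the permutations p₂ and p₃ has exactly two orbits, namely {1, 3, 5, 6, 7, 12, 13, 15} and {2, 4, 8, 9, 10, 11, 14, 16}. (Consequently there are exactly two isomorphism classes of surfaces of type II.) -/
/-!
Both generators preserve each of the two sets, so an orbit meeting one of them is contained in it.
Conversely, the `p3`-cycle of `0`, of length six, and its image under `p2` together cover the first
set, and the same holds for the `p3`-cycle of `1` and the second set.
-/

section Orbits

open MulAction Subgroup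
open scoped Pointwise

variable {G α : Type*} [Group G] [MulAction G α]

theorem setOf_eq_orbit_eq_pair {x y : α} (h : orbit G x ∪ orbit G y = Set.univ) :
    {s : Set α | ∃ z, s = orbit G z} = {orbit G x, orbit G y} := by
  apply Set.Subset.antisymm
  · rintro _ ⟨z, rfl⟩
    exact (h.ge (Set.mem_univ z)).imp orbit_eq_iff.mpr orbit_eq_iff.mpr
  · rintro _ (rfl | rfl)
    exacts [⟨x, rfl⟩, ⟨y, rfl⟩]

theorem orbit_subset_of_le_stabilizer {H : Subgroup G} {s : Set α} (hs : H ≤ stabilizer G s)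
    {x : α} (hx : x ∈ s) : orbit H x ⊆ s := by
  rintro _ ⟨h, rfl⟩
  exact (mem_stabilizer_set.mp (hs h.2) x).mpr hx

theorem pow_smul_pow_smul_mem_orbit {H : Subgroup G} {g k : G} (hg : g ∈ H) (hk : k ∈ H)
    (m n : ℕ) (x : α) : g ^ m • k ^ n • x ∈ orbit H x :=
  ⟨⟨g, hg⟩ ^ m * ⟨k, hk⟩ ^ n, mul_smul (g ^ m) (k ^ n) x⟩

theorem orbit_closure_pair_eq {g k : G} {s : Set α} (hg : g ∈ stabilizer G s)
    (hk : k ∈ stabilizer G s) {x : α} (hx : x ∈ s)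
    (hs : ∀ y ∈ s, ∃ m n : ℕ, g ^ m • k ^ n • x = y) : orbit (closure {g, k}) x = s := by
  apply Set.Subset.antisymm
  · have closure_le_stabilizer : closure {g, k} ≤ stabilizer G s :=
      (closure_le _).mpr (Set.pair_subset hg hk)
    exact orbit_subset_of_le_stabilizer closure_le_stabilizer hx
  · intro y hy
    obtain ⟨m, n, rfl⟩ := hs y hy
    exact pow_smul_pow_smul_mem_orbit (mem_closure_of_mem (Set.mem_insert g {k}))
      (mem_closure_of_mem (Set.mem_insert_of_mem g rfl)) m n x

theorem orbit_closure_p2_p3_zero :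
    orbit (closure {p2, p3}) (0 : Fin 16) = {0, 2, 4, 5, 6, 11, 12, 14} := by
  have p2_mem : p2 ∈ stabilizer _ ({0, 2, 4, 5, 6, 11, 12, 14} : Set (Fin 16)) :=
    mem_stabilizer_set.mpr (by decide)
  have p3_mem : p3 ∈ stabilizer _ ({0, 2, 4, 5, 6, 11, 12, 14} : Set (Fin 16)) :=
    mem_stabilizer_set.mpr (by decide)
  have reach : ∀ y ∈ ({0, 2, 4, 5, 6, 11, 12, 14} : Set (Fin 16)),
      ∃ m < 2, ∃ n < 6, p2 ^ m • p3 ^ n • (0 : Fin 16) = y := by decide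
  refine orbit_closure_pair_eq p2_mem p3_mem (by decide) fun y hy ↦ ?_
  obtain ⟨m, -, n, -, h⟩ := reach y hy
  exact ⟨m, n, h⟩

theorem orbit_closure_p2_p3_one :
    orbit (closure {p2, p3}) (1 : Fin 16) = {1, 3, 7, 8, 9, 10, 13, 15} := by
  have p2_mem : p2 ∈ stabilizer _ ({1, 3, 7, 8, 9, 10, 13, 15} : Set (Fin 16)) :=
    mem_stabilizer_set.mpr (by decide)
  have p3_mem : p3 ∈ stabilizer _ ({1, 3, 7, 8, 9, 10, 13, 15} : Set (Fin 16)) :=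
    mem_stabilizer_set.mpr (by decide)
  have reach : ∀ y ∈ ({1, 3, 7, 8, 9, 10, 13, 15} : Set (Fin 16)),
      ∃ m < 2, ∃ n < 6, p2 ^ m • p3 ^ n • (1 : Fin 16) = y := by decide
  refine orbit_closure_pair_eq p2_mem p3_mem (by decide) fun y hy ↦ ?_
  obtain ⟨m, -, n, -, h⟩ := reach y hy
  exact ⟨m, n, h⟩

end Orbits

/-- The action of ⟨p₂, p₃⟩ on {1,…,16} has exactly two orbits, namely
{1,3,5,6,7,12,13,15} and {2,4,8,9,10,11,14,16} (written 0-indexed). -/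
theorem stmt14 :
    {s : Set (Fin 16) |
        ∃ x : Fin 16, s = MulAction.orbit (Subgroup.closure {p2, p3}) x}
      = {({0, 2, 4, 5, 6, 11, 12, 14} : Set (Fin 16)),
         ({1, 3, 7, 8, 9, 10, 13, 15} : Set (Fin 16))} ∧
    ({0, 2, 4, 5, 6, 11, 12, 14} : Set (Fin 16))
      ≠ ({1, 3, 7, 8, 9, 10, 13, 15} : Set (Fin 16)) := by
  constructor
  · have cover : ({0, 2, 4, 5, 6, 11, 12, 14} ∪ {1, 3, 7, 8, 9, 10, 13, 15} : Set (Fin 16))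
        = Set.univ := Set.eq_univ_of_forall (by decide)
    rw [← orbit_closure_p2_p3_zero, ← orbit_closure_p2_p3_one] at cover ⊢
    exact setOf_eq_orbit_eq_pair cover
  · exact ne_of_mem_of_not_mem' (a := 0) (by decide) (by decide)
end

section
/- The natural action on {1,…,16} of the subgroup generated by the permutations p₂, p₃ and s is transitive, i.e. it has exactly one orbit. (Consequently the two non-isomorphic surfaces of type II are exchanged by an anti-holomorphic diffeomorphism, so they have conjugated complex structures.) -/
/-- The permutation s = (1 14)(2 7)(3 16)(4 5)(6 8)(9 15)(10 12)(11 13) of {1,…,16},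
written 0-indexed on `Fin 16`. -/
def sPerm : Equiv.Perm (Fin 16) :=
  ⟨![13, 6, 15, 4, 3, 7, 1, 5, 14, 11, 12, 9, 10, 0, 8, 2],
   ![13, 6, 15, 4, 3, 7, 1, 5, 14, 11, 12, 9, 10, 0, 8, 2],
   by decide, by decide⟩

/-!
Each of the four 4-cycles of `p2` contains exactly one of `0, 1, 2, 3`. The involution `sPerm` links
these cycles in a chain `0 — 1 — 2 — 3`, so `p2` and `sPerm` together have a single orbit.
-/

section SubgroupOrbits

variable {α : Type*} {H : Subgroup (Equiv.Perm α)} {f : Equiv.Perm α}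

lemma orbit_perm_apply (hf : f ∈ H) (x : α) :
    MulAction.orbit H (f x) = MulAction.orbit H x :=
  MulAction.orbit_smul (⟨f, hf⟩ : H) x

lemma orbit_eq_of_sameCycle (hf : f ∈ H) {x y : α} (hxy : f.SameCycle x y) :
    MulAction.orbit H x = MulAction.orbit H y := by
  obtain ⟨n, rfl⟩ := hxy
  exact (orbit_perm_apply (H.zpow_mem hf n) x).symm

lemma orbit_eq_of_sameCycle_apply {g : Equiv.Perm α} (hf : f ∈ H) (hg : g ∈ H) {x y : α}
    (hxy : f.SameCycle (g x) y) :
    MulAction.orbit H x = MulAction.orbit H y :=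
  (orbit_perm_apply hg x).symm.trans (orbit_eq_of_sameCycle hf hxy)

end SubgroupOrbits

lemma p2_sameCycle_zero_or_one_or_two_or_three (x : Fin 16) :
    p2.SameCycle x 0 ∨ p2.SameCycle x 1 ∨ p2.SameCycle x 2 ∨ p2.SameCycle x 3 := by
  revert x
  decide

lemma p2_sameCycle_sPerm_one_zero : p2.SameCycle (sPerm 1) 0 := by decide

lemma p2_sameCycle_sPerm_two_one : p2.SameCycle (sPerm 2) 1 := by decide

lemma p2_sameCycle_sPerm_three_two : p2.SameCycle (sPerm 3) 2 := by decide

lemma orbit_eq_orbit_zero {H : Subgroup (Equiv.Perm (Fin 16))} (hp : p2 ∈ H) (hs : sPerm ∈ H)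
    (x : Fin 16) : MulAction.orbit H x = MulAction.orbit H (0 : Fin 16) := by
  have orbit_one : MulAction.orbit H (1 : Fin 16) = MulAction.orbit H (0 : Fin 16) :=
    orbit_eq_of_sameCycle_apply hp hs p2_sameCycle_sPerm_one_zero
  have orbit_two : MulAction.orbit H (2 : Fin 16) = MulAction.orbit H (0 : Fin 16) :=
    (orbit_eq_of_sameCycle_apply hp hs p2_sameCycle_sPerm_two_one).trans orbit_one
  have orbit_three : MulAction.orbit H (3 : Fin 16) = MulAction.orbit H (0 : Fin 16) :=
    (orbit_eq_of_sameCycle_apply hp hs p2_sameCycle_sPerm_three_two).trans orbit_two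
  rcases p2_sameCycle_zero_or_one_or_two_or_three x with h | h | h | h
  · exact orbit_eq_of_sameCycle hp h
  · exact (orbit_eq_of_sameCycle hp h).trans orbit_one
  · exact (orbit_eq_of_sameCycle hp h).trans orbit_two
  · exact (orbit_eq_of_sameCycle hp h).trans orbit_three

theorem stmt16_general {H : Subgroup (Equiv.Perm (Fin 16))} (hp : p2 ∈ H) (hs : sPerm ∈ H)
    (x : Fin 16) : MulAction.orbit H x = Set.univ := by
  refine Set.eq_univ_of_forall fun y ↦ MulAction.orbit_eq_iff.mp ?_
  rw [orbit_eq_orbit_zero hp hs y, orbit_eq_orbit_zero hp hs x]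

/-- The action of ⟨p₂, p₃, s⟩ on {1,…,16} is transitive: it has exactly one orbit. -/
theorem stmt16 :
    ∀ x : Fin 16,
      MulAction.orbit (Subgroup.closure {p2, p3, sPerm}) x = Set.univ :=
  stmt16_general (Subgroup.subset_closure (by simp)) (Subgroup.subset_closure (by simp))
end
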